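/- arXiv:2305.02246 — 3 statements merged into one kernel-verified Lean document; each statement's English description precedes it below -/
import Mathlib

section
/- Let a ∈ ℝ with a > 10. Then q_a has a real periodic point of exact period 2 near −1: there exists w₀ ∈ ℝ such that q_a(q_a(w₀)) = w₀, q_a(w₀) ≠ w₀, |w₀ + 1| ≤ 3/a and |q_a(w₀) − 1| ≤ 3/a. -/
/-- For real `a > 10` the polynomial `q_a(w) = a (w² - 1)` has a real periodic point of exact
period 2 near `-1`, whose image lies near `+1`. -/
theorem stmt3 (a : ℝ) (ha : 10 < a) :
    ∃ w₀ : ℝ, a * ((a * (w₀ ^ 2 - 1)) ^ 2 - 1) = w₀ ∧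
      a * (w₀ ^ 2 - 1) ≠ w₀ ∧
      |w₀ + 1| ≤ 3 / a ∧ |a * (w₀ ^ 2 - 1) - 1| ≤ 3 / a := by
  -- Subtracting `q_a w = v` and `q_a v = w` and dividing by `w - v` gives `v + w = -1 / a`, so the
  -- 2-cycle consists of the two roots of `a² w² + a w + 1 - a² = 0`, of discriminant
  -- `a² (4 a² - 3)`.
  have ha0 : 0 < a := by linarith
  obtain ⟨s, hs0, hs⟩ : ∃ s : ℝ, 0 ≤ s ∧ s ^ 2 = 4 * a ^ 2 - 3 :=
    ⟨√(4 * a ^ 2 - 3), Real.sqrt_nonneg _, Real.sq_sqrt (by nlinarith)⟩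
  have h1 : 2 * a - 1 ≤ s := by nlinarith
  have h2 : s ≤ 2 * a := by nlinarith
  have hv : a * (((-1 - s) / (2 * a)) ^ 2 - 1) = (-1 + s) / (2 * a) := by
    field_simp
    linear_combination hs
  have hw : a * (((-1 + s) / (2 * a)) ^ 2 - 1) = (-1 - s) / (2 * a) := by
    field_simp
    linear_combination hs
  refine ⟨(-1 - s) / (2 * a), ?_, ?_, ?_, ?_⟩
  · rw [hv, hw]
  · rw [hv]
    intro h
    field_simp at h
    linarith
  · have e : (-1 - s) / (2 * a) + 1 = ((2 * a - 1 - s) / 2) / a := by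
      field_simp
      ring
    rw [e, abs_div, abs_of_pos ha0]
    gcongr
    rw [abs_le]
    constructor <;> linarith
  · have e : (-1 + s) / (2 * a) - 1 = ((s - 1 - 2 * a) / 2) / a := by
      field_simp
      ring
    rw [hv, e, abs_div, abs_of_pos ha0]
    gcongr
    rw [abs_le]
    constructor <;> linarith
end

section
/- Let ζ = e^{iπ/4} ∈ ℂ and ε₀ = (20(ζ − 1))⁻¹. There exists A₀ ∈ (0, 1/10) such that for every A ∈ (0, A₀) the following holds. Set α₀ = ζ(1 + A), β₀ = 2Aζ, and define the affine maps φ⁺(z) = (α₀² − β₀²)z − ε₀(β₀ + 1 − α₀), φ⁻(z) = (α₀² − β₀²)z − ε₀(β₀ + α₀ − 1), and φ₁ = φ⁺∘φ⁺, φ₂ = φ⁻∘φ⁺, φ₃ = φ⁺∘φ⁻, φ₄ = φ⁻∘φ⁻. Then there exist open sets H₁, H₂, H₃, H₄ ⊆ ℂ such that D(0,2) = H₁ ∪ H₂ ∪ H₃ ∪ H₄, the closure of φ_j(H_j) is contained in D(0,2) for each j ∈ {1,2,3,4}, and the closed unit disc {z ∈ ℂ : |z| ≤ 1} is contained in H_j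 for each j. -/
/-!
Put `m = (1 + A)² - 4A²`, so that `α₀² - β₀² = i m`. Since `ε₀ (1 - ζ) = -1/20`, the maps `φ⁺`, `φ⁻`
are perturbations of size `O(A)` of the isometries `z ↦ i z + 1/20` and `z ↦ i z - 1/20`. The four
composites are therefore `O(A)`-close, on the disc of radius `2`, to `z ↦ -z + d_j`, where `d_j` runs
through the four vertices `(±1 ± i)/20` of a square. Take `H_j` to be the set of `z` in `D(0,2)` with
`|φ_j z| < 99/50`. The closure condition is then immediate, and the unit disc is mapped well inside.
These sets cover `D(0,2)`: if `d_j` lies in the same closed quadrant as `z`, then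
`Re (z̄ d_j) = (|Re z| + |Im z|)/20 ≥ |z|/20`, whence
`|-z + d_j|² ≤ |z|² - |z|/10 + 1/200 ≤ 3.8 + 0.005 < 1.96²`, which leaves room for the perturbation.
-/

/-- `ζ = e^{iπ/4}`. -/
noncomputable def zeta : ℂ := Complex.exp ((Real.pi : ℂ) * Complex.I / 4)

/-- `ε₀ = (20(ζ - 1))⁻¹`. -/
noncomputable def eps0 : ℂ := (20 * (zeta - 1))⁻¹

lemma zeta_eq : zeta = (√2 / 2 : ℝ) + (√2 / 2 : ℝ) * Complex.I := by
  have h : zeta = Complex.exp (((Real.pi / 4 : ℝ) : ℂ) * Complex.I) := by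
    unfold zeta; congr 1; push_cast; ring
  rw [h, Complex.exp_mul_I, ← Complex.ofReal_cos, ← Complex.ofReal_sin, Real.cos_pi_div_four,
    Real.sin_pi_div_four]

lemma zeta_sq : zeta ^ 2 = Complex.I := by
  have h : ((√2 / 2 : ℝ) : ℂ) ^ 2 = 1 / 2 := by
    rw [← Complex.ofReal_pow, div_pow, Real.sq_sqrt (by norm_num)]; norm_num
  rw [zeta_eq]
  linear_combination (1 + 2 * Complex.I + Complex.I ^ 2) * h + (1 / 2) * Complex.I_sq

lemma norm_zeta : ‖zeta‖ = 1 := by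
  have h : ‖zeta‖ ^ 2 = 1 := by rw [← norm_pow, zeta_sq, Complex.norm_I]
  exact (pow_eq_one_iff_of_nonneg (norm_nonneg _) two_ne_zero).1 h

lemma half_le_norm_zeta_sub_one : 1 / 2 ≤ ‖zeta - 1‖ := by
  refine le_trans ?_ (Complex.abs_im_le_norm _)
  rw [zeta_eq]
  have h : (1 : ℝ) ≤ √2 := Real.one_le_sqrt.2 (by norm_num)
  simp only [Complex.sub_im, Complex.add_im, Complex.ofReal_im, Complex.mul_im, Complex.I_re,
    Complex.I_im, Complex.ofReal_re, Complex.one_im]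
  rw [le_abs]; left; linarith

lemma eps0_mul : eps0 * (zeta - 1) = 1 / 20 := by
  have h : zeta - 1 ≠ 0 := norm_pos_iff.1 (by linarith [half_le_norm_zeta_sub_one])
  unfold eps0
  field_simp

lemma norm_eps0_mul_zeta_le : ‖eps0 * zeta‖ ≤ 1 := by
  have h : ‖eps0‖ * ‖zeta - 1‖ = 1 / 20 := by
    rw [← norm_mul, eps0_mul]; norm_num
  rw [norm_mul, norm_zeta]
  nlinarith [norm_nonneg eps0, half_le_norm_zeta_sub_one]

/-- Both `φ⁺` (`b = 1/20`, `k = 1`) and `φ⁻` (`b = -1/20`, `k = 3`) have the form of `f` with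
`w = ε₀ ζ`, so they are `O(A)`-close to a quarter turn followed by the translation by `b`. -/
lemma single_bound {A k : ℝ} (hA : 0 < A) (hA1 : A < 1 / 20000) (hk : |k| ≤ 3) {b w : ℂ}
    (hw : ‖w‖ ≤ 1) (z : ℂ) :
    ‖(Complex.I * ((1 + A) ^ 2 - 4 * A ^ 2) * z + b - k * A * w) - (Complex.I * z + b)‖
      ≤ A * (2 * ‖z‖ + 3) := by
  have e : (Complex.I * ((1 + A) ^ 2 - 4 * A ^ 2) * z + b - k * A * w) - (Complex.I * z + b)
      = Complex.I * ((2 * A - 3 * A ^ 2 : ℝ) : ℂ) * z - (k : ℂ) * (A : ℂ) * w := by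
    push_cast; ring
  rw [e]
  refine (norm_sub_le _ _).trans ?_
  simp only [norm_mul, Complex.norm_I, Complex.norm_real, Real.norm_eq_abs, one_mul]
  rw [abs_of_pos hA, abs_of_nonneg (show 0 ≤ 2 * A - 3 * A ^ 2 by nlinarith)]
  have h1 : (2 * A - 3 * A ^ 2) * ‖z‖ ≤ 2 * A * ‖z‖ := by
    gcongr; nlinarith
  have h2 : |k| * A * ‖w‖ ≤ 3 * A * 1 := by gcongr
  linarith

lemma comp_bound {A : ℝ} (hA : 0 < A) (hA1 : A < 1 / 20000) {f g : ℂ → ℂ} {a b : ℂ}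
    (hb : ‖b‖ ≤ 1 / 20)
    (hf : ∀ z, ‖f z - (Complex.I * z + a)‖ ≤ A * (2 * ‖z‖ + 3))
    (hg : ∀ z, ‖g z - (Complex.I * z + b)‖ ≤ A * (2 * ‖z‖ + 3)) {z : ℂ} (hz : ‖z‖ ≤ 2) :
    ‖(f ∘ g) z - (-z + (Complex.I * b + a))‖ ≤ 1 / 1000 := by
  have hgz := hg z
  have hu : ‖g z‖ ≤ 3 := by
    have h1 : ‖g z‖ ≤ ‖g z - (Complex.I * z + b)‖ + ‖Complex.I * z + b‖ := by
      simpa using norm_add_le (g z - (Complex.I * z + b)) (Complex.I * z + b)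
    have h2 : ‖Complex.I * z + b‖ ≤ ‖z‖ + ‖b‖ := by
      simpa using norm_add_le (Complex.I * z) b
    nlinarith
  have e : (f ∘ g) z - (-z + (Complex.I * b + a))
      = (f (g z) - (Complex.I * g z + a)) + Complex.I * (g z - (Complex.I * z + b)) := by
    simp only [Function.comp]
    linear_combination z * Complex.I_sq
  rw [e]
  refine (norm_add_le _ _).trans ?_
  rw [norm_mul, Complex.norm_I, one_mul]
  have := hf (g z)
  nlinarith

/-- The part of `D(0,2)` that `F` maps into `D(0, 99/50)`. -/
def piece (F : ℂ → ℂ) : Set ℂ := {z | ‖z‖ < 2 ∧ ‖F z‖ < 99 / 50}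

lemma isOpen_piece {F : ℂ → ℂ} (hF : Continuous F) : IsOpen (piece F) :=
  (isOpen_lt continuous_norm continuous_const).inter (isOpen_lt hF.norm continuous_const)

lemma closure_piece (F : ℂ → ℂ) : closure (F '' piece F) ⊆ Metric.ball (0 : ℂ) 2 := by
  have h : closure (F '' piece F) ⊆ Metric.closedBall (0 : ℂ) (99 / 50) := by
    refine closure_minimal ?_ Metric.isClosed_closedBall
    rintro _ ⟨z, hz, rfl⟩
    simpa using hz.2.le
  exact h.trans (Metric.closedBall_subset_ball (by norm_num))

lemma norm_le_of_close {u v : ℂ} {r : ℝ} (h : ‖u - v‖ ≤ 1 / 1000) (hv : ‖v‖ < r) :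
    ‖u‖ < r + 1 / 1000 := by
  have := norm_sub_norm_le u v
  linarith

lemma closedBall_subset_piece {F : ℂ → ℂ} {d : ℂ} (hd : ‖d‖ ≤ 1 / 10)
    (hF : ∀ z, ‖z‖ ≤ 2 → ‖F z - (-z + d)‖ ≤ 1 / 1000) :
    Metric.closedBall (0 : ℂ) 1 ⊆ piece F := by
  intro z hz
  have hz1 : ‖z‖ ≤ 1 := by simpa using hz
  refine ⟨by linarith, ?_⟩
  have h1 : ‖-z + d‖ < 3 / 2 := by
    have := norm_add_le (-z) d
    rw [norm_neg] at this
    linarith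
  linarith [norm_le_of_close (hF z (by linarith)) h1]

/-- If the vertex `(s + t i)/20` lies in the closed quadrant of `z`, translating `-z` by it brings the
point strictly inside the disc of radius `2`. -/
lemma mem_piece {F : ℂ → ℂ} {s t : ℝ} (hs : s ^ 2 = 1) (ht : t ^ 2 = 1) {d : ℂ}
    (hd : d = (s + t * Complex.I) / 20)
    (hF : ∀ z, ‖z‖ ≤ 2 → ‖F z - (-z + d)‖ ≤ 1 / 1000) {z : ℂ} (hz : ‖z‖ < 2)
    (hre : 0 ≤ s * z.re) (him : 0 ≤ t * z.im) : z ∈ piece F := by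
  refine ⟨hz, ?_⟩
  have hsq : ‖z‖ ^ 2 = z.re ^ 2 + z.im ^ 2 := by
    rw [Complex.sq_norm, Complex.normSq_apply]; ring
  have hle : ‖z‖ ≤ s * z.re + t * z.im := by
    refine abs_le_of_sq_le_sq' ?_ (by positivity) |>.2
    nlinarith [mul_nonneg hre him]
  have h1 : ‖-z + d‖ ^ 2 = ‖z‖ ^ 2 - (s * z.re + t * z.im) / 10 + 1 / 200 := by
    have er : (-z + d).re = -z.re + s / 20 := by rw [hd]; simp
    have ei : (-z + d).im = -z.im + t / 20 := by rw [hd]; simp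
    rw [Complex.sq_norm, Complex.normSq_apply, er, ei, hsq]
    linear_combination (1 / 400) * hs + (1 / 400) * ht
  have h2 : ‖-z + d‖ < 49 / 25 := by
    refine abs_lt_of_sq_lt_sq' ?_ (by norm_num) |>.2
    nlinarith [mul_nonneg (sub_nonneg.2 hz.le) (add_nonneg (norm_nonneg z) (by norm_num : (0 : ℝ) ≤ 19 / 10))]
  linarith [norm_le_of_close (hF z hz.le) h2]

/-- The iterated-function-system lemma: for `A > 0` small, the four composed affine maps
`φ₁ = φ⁺∘φ⁺, φ₂ = φ⁻∘φ⁺, φ₃ = φ⁺∘φ⁻, φ₄ = φ⁻∘φ⁻` associated to `α₀ = ζ(1+A)`, `β₀ = 2Aζ`,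
`ε₀` admit open sets `H₁,…,H₄` covering `D(0,2)` with `closure (φ_j(H_j)) ⊆ D(0,2)` and
with the closed unit disc contained in each `H_j`. -/
theorem stmt4 :
    ∃ A₀ : ℝ, 0 < A₀ ∧ A₀ < 1 / 10 ∧
      ∀ A : ℝ, 0 < A → A < A₀ →
        ∀ (α₀ β₀ : ℂ) (φp φm : ℂ → ℂ),
          α₀ = zeta * (1 + (A : ℂ)) → β₀ = 2 * (A : ℂ) * zeta →
          (∀ z, φp z = (α₀ ^ 2 - β₀ ^ 2) * z - eps0 * (β₀ + 1 - α₀)) →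
          (∀ z, φm z = (α₀ ^ 2 - β₀ ^ 2) * z - eps0 * (β₀ + α₀ - 1)) →
          ∃ H : Fin 4 → Set ℂ,
            (∀ j, IsOpen (H j)) ∧
            Metric.ball (0 : ℂ) 2 = ⋃ j : Fin 4, H j ∧
            closure ((φp ∘ φp) '' H 0) ⊆ Metric.ball (0 : ℂ) 2 ∧
            closure ((φm ∘ φp) '' H 1) ⊆ Metric.ball (0 : ℂ) 2 ∧
            closure ((φp ∘ φm) '' H 2) ⊆ Metric.ball (0 : ℂ) 2 ∧
            closure ((φm ∘ φm) '' H 3) ⊆ Metric.ball (0 : ℂ) 2 ∧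
            ∀ j, Metric.closedBall (0 : ℂ) 1 ⊆ H j := by
  refine ⟨1 / 20000, by norm_num, by norm_num, ?_⟩
  intro A hA hA1 α₀ β₀ φp φm hα hβ hp hm
  have hκ : α₀ ^ 2 - β₀ ^ 2 = Complex.I * ((1 + (A : ℂ)) ^ 2 - 4 * (A : ℂ) ^ 2) := by
    rw [hα, hβ, ← zeta_sq]; ring
  have cp : Continuous φp := by rw [funext hp]; fun_prop
  have cm : Continuous φm := by rw [funext hm]; fun_prop
  have bp : ∀ z, ‖φp z - (Complex.I * z + 1 / 20)‖ ≤ A * (2 * ‖z‖ + 3) := by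
    intro z
    have e : φp z = Complex.I * ((1 + (A : ℂ)) ^ 2 - 4 * (A : ℂ) ^ 2) * z + 1 / 20
        - ((1 : ℝ) : ℂ) * A * (eps0 * zeta) := by
      rw [hp, hκ, hα, hβ]; push_cast
      linear_combination eps0_mul
    rw [e]
    exact single_bound hA hA1 (by norm_num) norm_eps0_mul_zeta_le z
  have bm : ∀ z, ‖φm z - (Complex.I * z + -(1 / 20))‖ ≤ A * (2 * ‖z‖ + 3) := by
    intro z
    have e : φm z = Complex.I * ((1 + (A : ℂ)) ^ 2 - 4 * (A : ℂ) ^ 2) * z + -(1 / 20)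
        - ((3 : ℝ) : ℂ) * A * (eps0 * zeta) := by
      rw [hm, hκ, hα, hβ]; push_cast
      linear_combination -eps0_mul
    rw [e]
    exact single_bound hA hA1 (by norm_num) norm_eps0_mul_zeta_le z
  have n1 : ‖(1 / 20 : ℂ)‖ ≤ 1 / 20 := by norm_num
  have n2 : ‖(-(1 / 20) : ℂ)‖ ≤ 1 / 20 := by norm_num
  have nd : ∀ a b : ℂ, ‖a‖ ≤ 1 / 20 → ‖b‖ ≤ 1 / 20 → ‖Complex.I * b + a‖ ≤ 1 / 10 := by
    intro a b ha hb
    have := norm_add_le (Complex.I * b) a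
    rw [norm_mul, Complex.norm_I, one_mul] at this
    linarith
  have hpp := fun z (hz : ‖z‖ ≤ 2) => comp_bound hA hA1 n1 bp bp hz
  have hmp := fun z (hz : ‖z‖ ≤ 2) => comp_bound hA hA1 n1 bm bp hz
  have hpm := fun z (hz : ‖z‖ ≤ 2) => comp_bound hA hA1 n2 bp bm hz
  have hmm := fun z (hz : ‖z‖ ≤ 2) => comp_bound hA hA1 n2 bm bm hz
  refine ⟨![piece (φp ∘ φp), piece (φm ∘ φp), piece (φp ∘ φm), piece (φm ∘ φm)], ?_, ?_,
    closure_piece _, closure_piece _, closure_piece _, closure_piece _, ?_⟩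
  · intro j
    fin_cases j
    · exact isOpen_piece (cp.comp cp)
    · exact isOpen_piece (cm.comp cp)
    · exact isOpen_piece (cp.comp cm)
    · exact isOpen_piece (cm.comp cm)
  · refine Set.Subset.antisymm ?_ (Set.iUnion_subset fun j z hz => ?_)
    · intro z hz
      have hz2 : ‖z‖ < 2 := by simpa using hz
      rw [Set.mem_iUnion]
      -- In `φ_s ∘ φ_t` the outer sign gives the real part of the vertex, the inner one its
      -- imaginary part.
      rcases le_total 0 z.re with hr | hr <;> rcases le_total 0 z.im with hi | hi
      · exact ⟨0, mem_piece (s := 1) (t := 1) (by norm_num) (by norm_num)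
          (by push_cast; ring) hpp hz2 (by linarith) (by linarith)⟩
      · exact ⟨2, mem_piece (s := 1) (t := -1) (by norm_num) (by norm_num)
          (by push_cast; ring) hpm hz2 (by linarith) (by linarith)⟩
      · exact ⟨1, mem_piece (s := -1) (t := 1) (by norm_num) (by norm_num)
          (by push_cast; ring) hmp hz2 (by linarith) (by linarith)⟩
      · exact ⟨3, mem_piece (s := -1) (t := -1) (by norm_num) (by norm_num)
          (by push_cast; ring) hmm hz2 (by linarith) (by linarith)⟩
    · have : ‖z‖ < 2 := by fin_cases j <;> exact hz.1
      simpa using this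
  · intro j
    fin_cases j
    · exact closedBall_subset_piece (nd _ _ n1 n1) hpp
    · exact closedBall_subset_piece (nd _ _ n2 n1) hmp
    · exact closedBall_subset_piece (nd _ _ n1 n2) hpm
    · exact closedBall_subset_piece (nd _ _ n2 n2) hmm
end

section
/- Let m ≥ 1, let M ⊆ ℂᵐ be a nonempty connected open set, and let P, R, Q : M → ℂ be holomorphic functions. Let (k_n) and (l_n) be sequences of positive integers such that l_n → ∞, the ratio k_n/l_n converges to some ω ∈ ℝ, and for every x ∈ M the sequence k_n·Re P(x) + l_n·Re R(x) converges to Re Q(x). Then there exists t ∈ ℝ such that R(x) = −ω·P(x) + i·t for all x ∈ M. -/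
/-!
Dividing the convergent sequence `k_n · Re P + l_n · Re R` by `l_n → ∞` gives
`Re (R + ωP) = 0` on `M`. A holomorphic function with vanishing real part on an open set has zero
derivative: its derivative is a complex linear map with values in `iℝ`, and such a map vanishes.
Connectedness of `M` then makes `R + ωP` a constant, which is purely imaginary.
-/

/-- The derivative `L` satisfies `Re (L v) = 0` for all `v`; applying this to `v` and to `i • v`
kills both parts of `L v`. -/
theorem fderiv_eq_zero_of_re_eq_zero {E : Type*} [NormedAddCommGroup E] [NormedSpace ℂ E]
    {M : Set E} (hM : IsOpen M) {G : E → ℂ} (hG : DifferentiableOn ℂ G M)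
    (hre : ∀ x ∈ M, (G x).re = 0) {x : E} (hx : x ∈ M) : fderiv ℂ G x = 0 := by
  letI : NormedSpace ℝ E := NormedSpace.restrictScalars ℝ ℂ E
  have hd : HasFDerivAt G (fderiv ℂ G x) x := (hG.differentiableAt (hM.mem_nhds hx)).hasFDerivAt
  have hd' := (Complex.reCLM.hasFDerivAt (x := G x)).comp x (hd.restrictScalars ℝ)
  have h0 : HasFDerivAt (Complex.reCLM ∘ G) (0 : E →L[ℝ] ℝ) x := by
    refine (hasFDerivAt_const (0 : ℝ) x).congr_of_eventuallyEq ?_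
    filter_upwards [hM.mem_nhds hx] with y hy
    exact hre y hy
  have hL : ∀ v, (fderiv ℂ G x v).re = 0 := fun v => by
    simpa using DFunLike.congr_fun (hd'.unique h0) v
  ext v
  refine Complex.ext (hL v) ?_
  simpa using hL (Complex.I • v)

/-- If `P, R, Q` are holomorphic on a connected open set `M ⊆ ℂᵐ` and there are sequences of
positive integers `k_n, l_n` with `l_n → ∞`, `k_n/l_n → ω`, such that
`k_n·Re P(x) + l_n·Re R(x) → Re Q(x)` for every `x ∈ M`, then there is `t ∈ ℝ` with
`R = −ωP + it` on `M`. -/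
theorem stmt14 (m : ℕ) (hm : 1 ≤ m) (M : Set (Fin m → ℂ))
    (hMconn : IsConnected M) (hMopen : IsOpen M)
    (P Rf Qf : (Fin m → ℂ) → ℂ)
    (hP : DifferentiableOn ℂ P M) (hRf : DifferentiableOn ℂ Rf M)
    (hQf : DifferentiableOn ℂ Qf M)
    (k l : ℕ → ℕ) (hkpos : ∀ n, 0 < k n) (hlpos : ∀ n, 0 < l n)
    (hl : Filter.Tendsto (fun n => (l n : ℝ)) Filter.atTop Filter.atTop)
    (ω : ℝ)
    (hratio : Filter.Tendsto (fun n => (k n : ℝ) / (l n : ℝ)) Filter.atTop (nhds ω))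
    (hconv : ∀ x ∈ M,
      Filter.Tendsto (fun n => (k n : ℝ) * (P x).re + (l n : ℝ) * (Rf x).re)
        Filter.atTop (nhds ((Qf x).re))) :
    ∃ t : ℝ, ∀ x ∈ M, Rf x = -(ω : ℂ) * P x + (t : ℂ) * Complex.I := by
  have hre : ∀ x ∈ M, (Rf x + (ω : ℂ) * P x).re = 0 := by
    intro x hx
    have h1 : Filter.Tendsto
        (fun n => ((k n : ℝ) * (P x).re + (l n : ℝ) * (Rf x).re) / (l n : ℝ))
        Filter.atTop (nhds 0) := (hconv x hx).div_atTop hl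
    have h2 : Filter.Tendsto (fun n => (k n : ℝ) / (l n : ℝ) * (P x).re + (Rf x).re)
        Filter.atTop (nhds (ω * (P x).re + (Rf x).re)) :=
      (hratio.mul_const _).add_const _
    have h3 : (fun n => ((k n : ℝ) * (P x).re + (l n : ℝ) * (Rf x).re) / (l n : ℝ)) =
        fun n => (k n : ℝ) / (l n : ℝ) * (P x).re + (Rf x).re := by
      funext n
      have : (l n : ℝ) ≠ 0 := Nat.cast_ne_zero.mpr (hlpos n).ne'
      field_simp
    rw [h3] at h1
    have h4 := tendsto_nhds_unique h2 h1
    simp only [Complex.add_re, Complex.re_ofReal_mul]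
    linarith
  have hG : DifferentiableOn ℂ (fun x => Rf x + (ω : ℂ) * P x) M := hRf.add (hP.const_mul _)
  obtain ⟨c, hc⟩ := hMopen.exists_is_const_of_fderiv_eq_zero hMconn.isPreconnected hG
    (fun x hx => fderiv_eq_zero_of_re_eq_zero hMopen hG hre hx)
  obtain ⟨x₀, hx₀⟩ := hMconn.nonempty
  have hc0 : c.re = 0 := by rw [← hc x₀ hx₀]; exact hre x₀ hx₀
  have hcI : c = (c.im : ℂ) * Complex.I := by
    apply Complex.ext <;> simp [hc0]
  refine ⟨c.im, fun x hx => ?_⟩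
  have h : Rf x + (ω : ℂ) * P x = c := hc x hx
  rw [← hcI, ← h]
  ring
end
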